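/- Let 1 < p ≤ 2 with Hölder conjugate p*, let λ satisfy 0 < λ < 1/p*, and set σ_j = j^{−λ} for j ∈ ℕ. Then for every ρ > 0 and all constants C, C₁, C₂ ∈ (0,∞) there exist m ∈ ℕ and 1 ≤ n < m such that, for an n×m random matrix G_{n,m} with i.i.d. standard Gaussian entries, Pr[rad(E^m_{p,σ}, ker G_{n,m}) ≤ C·n^{−ρ}] < 1 − C₁·exp(−C₂·n). In other words, the polynomial decay rate of the radius of random information, decay(rad(E^m_{p,σ}, G_{n,m})) := sup{ρ ≥ 0 : ∃ C, C₁, C₂ ∈ (0,∞) such that rad(E^m_{p,σ}, ker G_{n,m}) ≤ C·n^{−ρ} holds with probability at least 1 − C₁·exp(−C₂·n) for all m ∈ ℕ and 1 ≤ n < m}, equals 0. -/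

import Mathlib

open MeasureTheory ProbabilityTheory
open scoped ENNReal NNReal

/-- The `ℓ_p`-(quasi-)norm on `ℝ^m`, for `0 < p ≤ ∞`. -/
noncomputable def lpnorm (p : ℝ≥0∞) {m : ℕ} (x : Fin m → ℝ) : ℝ :=
  if p = ∞ then ⨆ j, |x j| else (∑ j, |x j| ^ p.toReal) ^ (1 / p.toReal)

/-- The `ℓ_p`-ellipsoid with semiaxes `σ`. -/
noncomputable def ellipsoid (p : ℝ≥0∞) {m : ℕ} (σ : Fin m → ℝ) : Set (Fin m → ℝ) :=
  {x | lpnorm p (fun j => x j / σ j) ≤ 1}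

/-- `rad_q(K, E)`: the supremum of the `ℓ_q`-norm over `K ∩ E`. -/
noncomputable def radq (q : ℝ≥0∞) {m : ℕ} (K E : Set (Fin m → ℝ)) : ℝ :=
  sSup (lpnorm q '' (K ∩ E))

/-- The distribution of an `n × m` random matrix with i.i.d. standard Gaussian entries. -/
noncomputable def gaussianMatrix (n m : ℕ) : Measure (Fin n → Fin m → ℝ) :=
  Measure.pi fun _ : Fin n => Measure.pi fun _ : Fin m => gaussianReal 0 1

/-- The kernel of a matrix `A ∈ ℝ^{n×m}`, as a subset of `ℝ^m`. -/
def kerSet {n m : ℕ} (A : Fin n → Fin m → ℝ) : Set (Fin m → ℝ) :=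
  {x | ∀ i, ∑ j, A i j * x j = 0}

/-- The Hölder conjugate `p*` of `p ∈ (1, ∞]`, as a real number
(with the convention `(∞ : ℝ≥0∞).toReal = 0`, so `pstar ∞ = 1`). -/
noncomputable def pstar (p : ℝ≥0∞) : ℝ := (1 - 1 / p.toReal)⁻¹

/-!
Project the first unit vector `e` onto the row space of the `n × m` matrix `A`, and let `u` be the
projection. The squared lengths of the projections of all `m` unit vectors (the leverage scores of
the columns) add up to `rank A ≤ n`, and if the columns of `A` are exchangeable they all have the
same mean, hence mean at most `n / m`. By Markov's inequality `‖u‖₂²` is of order `n / m` with high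
probability, and then `‖u‖_p ≤ m ^ (1/p - 1/2) ‖u‖₂` is of order `√n * m ^ (1/p - 1)`. If this is
negligible against the smallest semiaxis `σ_m`, as it is for fixed `n` and `m → ∞` when
`m ^ (1/p - 1) = o(σ_m)`, the kernel vector `(σ_1 / 2) (e - u)` lies in the ellipsoid. So the radius
is at least `σ_1 / 4` with probability tending to `1`, whatever `n` is.
-/

open Filter Topology

section Projection

variable {𝕜 E : Type*} [RCLike 𝕜] [NormedAddCommGroup E] [InnerProductSpace 𝕜 E]

lemma inner_starProjection_right_self (K : Submodule 𝕜 E) [K.HasOrthogonalProjection] (x : E) :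
    inner 𝕜 x (K.starProjection x) = (‖K.starProjection x‖ : 𝕜) ^ 2 := by
  rw [← inner_self_eq_norm_sq_to_K, Submodule.inner_starProjection_left_eq_right,
    Submodule.starProjection_eq_self_iff.mpr (K.starProjection_apply_mem x)]

lemma isProj_starProjection (K : Submodule 𝕜 E) [K.HasOrthogonalProjection] :
    LinearMap.IsProj K (K.starProjection : E →ₗ[𝕜] E) :=
  ⟨K.starProjection_apply_mem, fun _ hx => Submodule.starProjection_eq_self_iff.mpr hx⟩

lemma sum_norm_starProjection_sq_eq_finrank {κ : Type*} [Fintype κ] (b : OrthonormalBasis κ 𝕜 E)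
    (K : Submodule 𝕜 E) [K.HasOrthogonalProjection] :
    ∑ j, ‖K.starProjection (b j)‖ ^ 2 = Module.finrank 𝕜 K := by
  have : FiniteDimensional 𝕜 E := b.toBasis.finiteDimensional_of_finite
  have htrace := LinearMap.trace_eq_sum_inner (K.starProjection : E →ₗ[𝕜] E) b
  rw [(isProj_starProjection K).trace] at htrace
  simp only [ContinuousLinearMap.coe_coe, inner_starProjection_right_self] at htrace
  exact_mod_cast htrace.symm

lemma lt_norm_starProjection_sq_iff {ε : ℝ} (hε : 0 ≤ ε) (K : Submodule 𝕜 E)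
    [K.HasOrthogonalProjection] (x : E) :
    ε < ‖K.starProjection x‖ ^ 2 ↔ ∃ v ∈ K, ε * ‖v‖ ^ 2 < ‖inner 𝕜 x v‖ ^ 2 := by
  constructor
  · intro h
    refine ⟨K.starProjection x, K.starProjection_apply_mem x, ?_⟩
    rw [inner_starProjection_right_self, norm_pow, RCLike.norm_ofReal, abs_norm, sq (_ ^ 2)]
    exact mul_lt_mul_of_pos_right h (hε.trans_lt h)
  · rintro ⟨v, hv, h⟩
    have hinner : inner 𝕜 x v = inner 𝕜 (K.starProjection x) v := by
      rw [Submodule.inner_starProjection_left_eq_right,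
        Submodule.starProjection_eq_self_iff.mpr hv]
    have hcs : ‖inner 𝕜 x v‖ ^ 2 ≤ ‖K.starProjection x‖ ^ 2 * ‖v‖ ^ 2 := by
      rw [hinner, ← mul_pow]
      gcongr
      exact norm_inner_le_norm _ _
    exact lt_of_mul_lt_mul_right (h.trans_le hcs) (sq_nonneg _)

end Projection

section LeverageScore

variable {ι κ : Type*}

/-- The row space of a matrix, as a subspace of Euclidean space; its orthogonal complement is the
kernel of the matrix. -/
def rowSpace (A : ι → κ → ℝ) : Submodule ℝ (EuclideanSpace ℝ κ) :=
  Submodule.span ℝ (Set.range fun i => WithLp.toLp 2 (A i))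

lemma finrank_rowSpace_le [Fintype ι] (A : ι → κ → ℝ) :
    Module.finrank ℝ (rowSpace A) ≤ Fintype.card ι :=
  finrank_range_le_card fun i => WithLp.toLp 2 (A i)

lemma ofLp_mem_kerSet_of_mem_rowSpace_orthogonal {n m : ℕ} {A : Fin n → Fin m → ℝ}
    {x : EuclideanSpace ℝ (Fin m)} (hx : x ∈ (rowSpace A)ᗮ) : WithLp.ofLp x ∈ kerSet A := by
  intro i
  have h : inner ℝ (WithLp.toLp 2 (A i)) x = 0 := hx _ (Submodule.subset_span ⟨i, rfl⟩)
  simpa [PiLp.inner_apply, mul_comm] using h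

variable [Fintype κ] [DecidableEq κ]

/-- The leverage score of column `j`: the squared length of the orthogonal projection of the `j`-th
unit vector onto the row space of the matrix. -/
noncomputable def leverageScore (A : ι → κ → ℝ) (j : κ) : ℝ :=
  ‖(rowSpace A).starProjection (EuclideanSpace.single j 1)‖ ^ 2

lemma leverageScore_nonneg (A : ι → κ → ℝ) (j : κ) : 0 ≤ leverageScore A j := sq_nonneg _

lemma starProjection_rowSpace_single_self (A : ι → κ → ℝ) (j : κ) :
    (rowSpace A).starProjection (EuclideanSpace.single j 1) j = leverageScore A j := by
  have h := inner_starProjection_right_self (rowSpace A) (EuclideanSpace.single j (1 : ℝ))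
  simpa [EuclideanSpace.inner_single_left, leverageScore] using h

lemma sum_leverageScore_le [Fintype ι] (A : ι → κ → ℝ) :
    ∑ j, leverageScore A j ≤ Fintype.card ι := by
  have h := sum_norm_starProjection_sq_eq_finrank (EuclideanSpace.basisFun κ ℝ) (rowSpace A)
  simp only [EuclideanSpace.basisFun_apply] at h
  exact h.trans_le (by exact_mod_cast finrank_rowSpace_le A)

-- For fixed `z` both sides are continuous in `A`, which the projection onto `rowSpace A` is not.
lemma lt_leverageScore_iff [Fintype ι] {ε : ℝ} (hε : 0 ≤ ε) (A : ι → κ → ℝ) (j : κ) :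
    ε < leverageScore A j ↔
      ∃ z : ι → ℝ, ε * ∑ k, (∑ i, z i * A i k) ^ 2 < (∑ i, z i * A i j) ^ 2 := by
  rw [leverageScore, lt_norm_starProjection_sq_iff hε]
  simp only [rowSpace, Submodule.mem_span_range_iff_exists_fun, exists_exists_eq_and,
    EuclideanSpace.inner_single_left, EuclideanSpace.real_norm_sq_eq]
  simp

lemma leverageScore_comp_perm [Finite ι] (A : ι → κ → ℝ) (s : Equiv.Perm κ) (j : κ) :
    leverageScore (fun i k => A i (s k)) j = leverageScore A (s j) := by
  cases nonempty_fintype ι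
  refine eq_of_forall_lt_iff fun ε => ?_
  rcases lt_or_ge ε 0 with hε | hε
  · simp only [hε.trans_le (leverageScore_nonneg _ _)]
  · simp only [lt_leverageScore_iff hε]
    refine exists_congr fun z => ?_
    rw [Equiv.sum_comp s fun k => (∑ i, z i * A i k) ^ 2]

lemma lowerSemicontinuous_leverageScore [Finite ι] (j : κ) :
    LowerSemicontinuous fun A : ι → κ → ℝ => leverageScore A j := by
  cases nonempty_fintype ι
  rw [lowerSemicontinuous_iff_isOpen_preimage]
  intro ε
  rcases lt_or_ge ε 0 with hε | hε
  · convert! isOpen_univ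
    exact Set.eq_univ_of_forall fun A => hε.trans_le (leverageScore_nonneg A j)
  · simp only [Set.preimage, Set.mem_Ioi, lt_leverageScore_iff hε, Set.ofPred_exists]
    exact isOpen_iUnion fun z => isOpen_lt (by fun_prop) (by fun_prop)

end LeverageScore

section Exchangeable

variable {ι κ : Type*}

/-- The law of a random matrix is column exchangeable if it is invariant under every permutation of
the columns. -/
def IsColumnExchangeable (ν : Measure (ι → κ → ℝ)) : Prop :=
  ∀ s : Equiv.Perm κ, MeasurePreserving (fun (A : ι → κ → ℝ) i k => A i (s k)) ν ν

lemma isColumnExchangeable_pi_pi [Fintype ι] [Fintype κ] (μ : ι → Measure ℝ)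
    [∀ i, SigmaFinite (μ i)] :
    IsColumnExchangeable (Measure.pi fun i => Measure.pi fun _ : κ => μ i) := by
  intro s
  refine measurePreserving_pi (fun i => Measure.pi fun _ : κ => μ i)
    (fun i => Measure.pi fun _ : κ => μ i) (f := fun _ a k => a (s k)) fun i => ?_
  convert! measurePreserving_piCongrLeft (fun _ : κ => μ i) s.symm using 1
  ext a k
  simp [MeasurableEquiv.piCongrLeft, Equiv.piCongrLeft, Equiv.piCongrLeft']

variable [Fintype κ] [DecidableEq κ] {ν : Measure (ι → κ → ℝ)}

lemma lintegral_leverageScore_eq [Finite ι] (hν : IsColumnExchangeable ν) (j k : κ) :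
    ∫⁻ A, ENNReal.ofReal (leverageScore A j) ∂ν = ∫⁻ A, ENNReal.ofReal (leverageScore A k) ∂ν := by
  have hmeas := (lowerSemicontinuous_leverageScore (ι := ι) k).measurable.ennreal_ofReal
  rw [← (hν (Equiv.swap j k)).lintegral_comp hmeas]
  simp only [leverageScore_comp_perm, Equiv.swap_apply_right]

variable [Fintype ι] [IsProbabilityMeasure ν]

lemma card_mul_lintegral_leverageScore_le (hν : IsColumnExchangeable ν) (j : κ) :
    Fintype.card κ * ∫⁻ A, ENNReal.ofReal (leverageScore A j) ∂ν ≤ Fintype.card ι :=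
  calc Fintype.card κ * ∫⁻ A, ENNReal.ofReal (leverageScore A j) ∂ν
      = ∑ k, ∫⁻ A, ENNReal.ofReal (leverageScore A k) ∂ν := by
        simp [fun k => lintegral_leverageScore_eq hν k j]
    _ = ∫⁻ A, ENNReal.ofReal (∑ k, leverageScore A k) ∂ν := by
        simp_rw [ENNReal.ofReal_sum_of_nonneg fun k _ => leverageScore_nonneg _ k]
        exact (lintegral_finsetSum _ fun k _ =>
          (lowerSemicontinuous_leverageScore k).measurable.ennreal_ofReal).symm
    _ ≤ ∫⁻ _, Fintype.card ι ∂ν := lintegral_mono fun A =>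
        (ENNReal.ofReal_le_ofReal (sum_leverageScore_le A)).trans_eq (ENNReal.ofReal_natCast _)
    _ = Fintype.card ι := by simp

lemma measure_le_leverageScore_le (hν : IsColumnExchangeable ν) {ε : ℝ} (hε : 0 < ε) (j : κ) :
    ν {A | ε ≤ leverageScore A j} ≤
      ENNReal.ofReal (Fintype.card ι / (Fintype.card κ * ε)) := by
  have : Nonempty κ := ⟨j⟩
  have hκ : (0 : ℝ) < Fintype.card κ := by exact_mod_cast Fintype.card_pos
  have hmeas := (lowerSemicontinuous_leverageScore (ι := ι) j).measurable.ennreal_ofReal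
  have hmarkov := mul_meas_ge_le_lintegral (μ := ν) hmeas (ENNReal.ofReal ε)
  simp only [ENNReal.ofReal_le_ofReal_iff (leverageScore_nonneg _ j)] at hmarkov
  rw [ENNReal.ofReal_div_of_pos (by positivity), ENNReal.ofReal_mul hκ.le, ENNReal.ofReal_natCast,
    ENNReal.ofReal_natCast, ENNReal.le_div_iff_mul_le (.inl (by simp [hε])) (.inl (by finiteness))]
  calc ν {A | ε ≤ leverageScore A j} * (Fintype.card κ * ENNReal.ofReal ε)
      = Fintype.card κ * (ENNReal.ofReal ε * ν {A | ε ≤ leverageScore A j}) := by ring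
    _ ≤ Fintype.card κ * ∫⁻ A, ENNReal.ofReal (leverageScore A j) ∂ν := by gcongr
    _ ≤ Fintype.card ι := card_mul_lintegral_leverageScore_le hν j

end Exchangeable

section LpNorm

variable {p q : ℝ≥0∞} {m : ℕ}

lemma lpnorm_eq_norm_toLp [Fact (1 ≤ p)] (x : Fin m → ℝ) : lpnorm p x = ‖WithLp.toLp p x‖ := by
  rcases eq_or_ne p ∞ with rfl | hp
  · simp [lpnorm, PiLp.norm_eq_ciSup]
  · have hp0 : p ≠ 0 := (zero_lt_one.trans_le Fact.out).ne'
    simp [lpnorm, hp, PiLp.norm_eq_sum (ENNReal.toReal_pos hp0 hp)]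

lemma lpnorm_mono {x y : Fin m → ℝ} (h : ∀ k, |x k| ≤ |y k|) : lpnorm p x ≤ lpnorm p y := by
  unfold lpnorm
  split_ifs
  · exact ciSup_mono (Set.finite_range _).bddAbove h
  · gcongr ?_ ^ _
    exact Finset.sum_le_sum fun k _ =>
      Real.rpow_le_rpow (abs_nonneg _) (h k) ENNReal.toReal_nonneg

lemma lpnorm_le_rpow_mul_lpnorm (hp : p ≠ 0) (hpq : p ≤ q) (hq : q ≠ ∞) (x : Fin m → ℝ) :
    lpnorm p x ≤ (m : ℝ) ^ (1 / p.toReal - 1 / q.toReal) * lpnorm q x := by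
  have hp_top : p ≠ ∞ := ne_top_of_le_ne_top hq hpq
  have hp_pos : 0 < p.toReal := ENNReal.toReal_pos hp hp_top
  have hpq_real : p.toReal ≤ q.toReal := ENNReal.toReal_mono hq hpq
  have hq_pos : 0 < q.toReal := hp_pos.trans_le hpq_real
  have hpow := Real.rpow_sum_le_const_mul_sum_rpow_of_nonneg Finset.univ
    (f := fun k => |x k| ^ p.toReal) ((one_le_div hp_pos).mpr hpq_real) fun _ _ => by positivity
  simp only [← Real.rpow_mul (abs_nonneg _), mul_div_cancel₀ _ hp_pos.ne', Finset.card_univ,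
    Fintype.card_fin] at hpow
  simp only [lpnorm, hp_top, hq, if_false]
  calc (∑ k, |x k| ^ p.toReal) ^ (1 / p.toReal)
      = ((∑ k, |x k| ^ p.toReal) ^ (q.toReal / p.toReal)) ^ (1 / q.toReal) := by
        rw [← Real.rpow_mul (by positivity)]
        congr 1
        field_simp
    _ ≤ ((m : ℝ) ^ (q.toReal / p.toReal - 1) * ∑ k, |x k| ^ q.toReal) ^ (1 / q.toReal) := by
        gcongr
    _ = (m : ℝ) ^ (1 / p.toReal - 1 / q.toReal) * (∑ k, |x k| ^ q.toReal) ^ (1 / q.toReal) := by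
        rw [Real.mul_rpow (by positivity) (by positivity), ← Real.rpow_mul (by positivity)]
        congr 2
        field_simp

end LpNorm

section Ellipsoid

variable {p q : ℝ≥0∞} [Fact (1 ≤ p)] {m : ℕ} {σ : Fin m → ℝ}

lemma abs_apply_le_of_mem_ellipsoid (hσ : ∀ k, 0 < σ k) {x : Fin m → ℝ} (hx : x ∈ ellipsoid p σ)
    (k : Fin m) : |x k| ≤ σ k := by
  have hle : |x k / σ k| ≤ 1 := by
    refine (PiLp.norm_apply_le (WithLp.toLp p fun k => x k / σ k) k).trans ?_
    rw [← lpnorm_eq_norm_toLp]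
    exact hx
  rwa [abs_div, abs_of_pos (hσ k), div_le_one (hσ k)] at hle

lemma abs_apply_le_radq_ellipsoid [Fact (1 ≤ q)] (hσ : ∀ k, 0 < σ k) {E : Set (Fin m → ℝ)}
    {x : Fin m → ℝ} (hx : x ∈ ellipsoid p σ) (hxE : x ∈ E) (j : Fin m) :
    |x j| ≤ radq q (ellipsoid p σ) E := by
  have hbdd : BddAbove (lpnorm q '' (ellipsoid p σ ∩ E)) := by
    refine ⟨lpnorm q σ, ?_⟩
    rintro _ ⟨y, ⟨hy, -⟩, rfl⟩
    exact lpnorm_mono fun k => (abs_apply_le_of_mem_ellipsoid hσ hy k).trans (le_abs_self _)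
  calc |x j| ≤ lpnorm q x := by
        rw [lpnorm_eq_norm_toLp]
        exact PiLp.norm_apply_le (WithLp.toLp q x) j
    _ ≤ radq q (ellipsoid p σ) E := le_csSup hbdd ⟨x, ⟨hx, hxE⟩, rfl⟩

variable {s : ℝ}

lemma lpnorm_div_le (hs : 0 < s) (hsσ : ∀ k, s ≤ σ k) (u : Fin m → ℝ) :
    lpnorm p (fun k => u k / σ k) ≤ lpnorm p u / s :=
  calc lpnorm p (fun k => u k / σ k) ≤ lpnorm p (s⁻¹ • u) := by
        refine lpnorm_mono fun k => ?_
        rw [Pi.smul_apply, smul_eq_mul, inv_mul_eq_div, abs_div, abs_div, abs_of_pos hs,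
          abs_of_pos (hs.trans_le (hsσ k))]
        exact div_le_div_of_nonneg_left (abs_nonneg _) hs (hsσ k)
    _ = lpnorm p u / s := by
        rw [lpnorm_eq_norm_toLp, lpnorm_eq_norm_toLp, WithLp.toLp_smul, norm_smul,
          Real.norm_of_nonneg (by positivity), inv_mul_eq_div]

lemma smul_single_sub_mem_ellipsoid (hs : 0 < s) (hsσ : ∀ k, s ≤ σ k) {j : Fin m}
    {u : Fin m → ℝ} (hu : σ j * lpnorm p u ≤ s) :
    (σ j / 2) • (Pi.single j 1 - u : Fin m → ℝ) ∈ ellipsoid p σ := by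
  have hσj : 0 < σ j := hs.trans_le (hsσ j)
  have hdecomp : (fun k => ((σ j / 2) • (Pi.single j 1 - u : Fin m → ℝ)) k / σ k) =
      (1 / 2 : ℝ) • Pi.single j 1 - (σ j / 2) • fun k => u k / σ k := by
    ext k
    rcases eq_or_ne k j with rfl | hk
    · simp only [Pi.smul_apply, Pi.sub_apply, Pi.single_eq_same, smul_eq_mul]
      field_simp
    · simp only [Pi.smul_apply, Pi.sub_apply, Pi.single_eq_of_ne hk, smul_eq_mul]
      ring
  have hscaled : σ j / 2 * lpnorm p (fun k => u k / σ k) ≤ 1 / 2 :=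
    calc σ j / 2 * lpnorm p (fun k => u k / σ k) ≤ σ j / 2 * (lpnorm p u / s) := by
          gcongr
          exact lpnorm_div_le hs hsσ u
      _ = σ j * lpnorm p u / s / 2 := by ring
      _ ≤ 1 / 2 := by
          gcongr
          exact (div_le_one hs).mpr hu
  calc lpnorm p (fun k => ((σ j / 2) • (Pi.single j 1 - u : Fin m → ℝ)) k / σ k)
      ≤ 1 / 2 + σ j / 2 * lpnorm p (fun k => u k / σ k) := by
        rw [hdecomp, lpnorm_eq_norm_toLp, lpnorm_eq_norm_toLp, WithLp.toLp_sub]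
        refine (norm_sub_le _ _).trans_eq ?_
        rw [WithLp.toLp_smul, WithLp.toLp_smul, norm_smul, norm_smul, PiLp.toLp_single,
          PiLp.norm_single, norm_one, mul_one, Real.norm_of_nonneg (by positivity),
          Real.norm_of_nonneg (by positivity)]
    _ ≤ 1 := by linarith

end Ellipsoid

section Radius

variable {p : ℝ≥0∞} [Fact (1 ≤ p)] {n m : ℕ} {σ : Fin m → ℝ} {s : ℝ}

lemma lpnorm_two_starProjection_rowSpace_single (A : Fin n → Fin m → ℝ) (j : Fin m) :
    lpnorm 2 (WithLp.ofLp ((rowSpace A).starProjection (EuclideanSpace.single j 1))) =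
      √(leverageScore A j) := by
  rw [lpnorm_eq_norm_toLp, WithLp.toLp_ofLp, leverageScore, Real.sqrt_sq (norm_nonneg _)]

lemma one_le_mul_rpow_div (hp : p ≤ 2) (hs : 0 < s) (hsσ : ∀ k, s ≤ σ k) (j : Fin m) :
    1 ≤ σ j * (m : ℝ) ^ (1 / p.toReal - 1 / 2) / s := by
  have hp1 : 1 ≤ p := Fact.out
  have hp0 : p ≠ 0 := (zero_lt_one.trans_le hp1).ne'
  have hp_top : p ≠ ∞ := ne_top_of_le_ne_top (by simp) hp
  have hp_pos : 0 < p.toReal := ENNReal.toReal_pos hp0 hp_top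
  have hp_real : p.toReal ≤ 2 := by simpa using ENNReal.toReal_mono (by simp) hp
  have hm : (1 : ℝ) ≤ m := by exact_mod_cast j.pos
  rw [one_le_div hs]
  refine (hsσ j).trans (le_mul_of_one_le_right (hs.trans_le (hsσ j)).le ?_)
  exact Real.one_le_rpow hm (sub_nonneg.mpr (one_div_le_one_div_of_le hp_pos hp_real))

lemma div_four_le_radq_of_lpnorm_starProjection_le (hs : 0 < s) (hsσ : ∀ k, s ≤ σ k) {j : Fin m}
    {A : Fin n → Fin m → ℝ} (hscore : leverageScore A j ≤ 1 / 2)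
    (hproj : σ j * lpnorm p
      (WithLp.ofLp ((rowSpace A).starProjection (EuclideanSpace.single j 1))) ≤ s) :
    σ j / 4 ≤ radq 2 (ellipsoid p σ) (kerSet A) := by
  have hσ k : 0 < σ k := hs.trans_le (hsσ k)
  set x : EuclideanSpace ℝ (Fin m) := EuclideanSpace.single j 1 -
    (rowSpace A).starProjection (EuclideanSpace.single j 1) with hx
  have hker : (σ j / 2) • WithLp.ofLp x ∈ kerSet A := by
    rw [← WithLp.ofLp_smul]
    exact ofLp_mem_kerSet_of_mem_rowSpace_orthogonal
      (Submodule.smul_mem _ _ (Submodule.sub_starProjection_mem_orthogonal _))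
  have hellipsoid : (σ j / 2) • WithLp.ofLp x ∈ ellipsoid p σ := by
    rw [hx, WithLp.ofLp_sub]
    exact smul_single_sub_mem_ellipsoid hs hsσ hproj
  have hxj : x j = 1 - leverageScore A j := by
    rw [hx, PiLp.sub_apply, starProjection_rowSpace_single_self, PiLp.single_apply, if_pos rfl]
  calc σ j / 4 ≤ σ j / 2 * x j := by nlinarith [hσ j]
    _ ≤ |((σ j / 2) • WithLp.ofLp x) j| := le_abs_self _
    _ ≤ radq 2 (ellipsoid p σ) (kerSet A) := abs_apply_le_radq_ellipsoid hσ hellipsoid hker j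

lemma div_four_le_radq_of_leverageScore_le (hp : p ≤ 2) (hs : 0 < s) (hsσ : ∀ k, s ≤ σ k)
    {j : Fin m} {A : Fin n → Fin m → ℝ}
    (hA : 2 * (σ j * (m : ℝ) ^ (1 / p.toReal - 1 / 2) / s) ^ 2 * leverageScore A j ≤ 1) :
    σ j / 4 ≤ radq 2 (ellipsoid p σ) (kerSet A) := by
  have hp0 : p ≠ 0 := (zero_lt_one.trans_le Fact.out).ne'
  set κ := σ j * (m : ℝ) ^ (1 / p.toReal - 1 / 2) / s with hκ
  have hκ_one : 1 ≤ κ := one_le_mul_rpow_div hp hs hsσ j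
  have hscore := leverageScore_nonneg A j
  refine div_four_le_radq_of_lpnorm_starProjection_le hs hsσ ?_ ?_
  · nlinarith [mul_le_mul_of_nonneg_right (one_le_pow₀ hκ_one (n := 2)) hscore]
  have hnorm := lpnorm_le_rpow_mul_lpnorm hp0 hp (by simp)
    (WithLp.ofLp ((rowSpace A).starProjection (EuclideanSpace.single j 1)))
  rw [lpnorm_two_starProjection_rowSpace_single] at hnorm
  have hκ_sqrt : κ * √(leverageScore A j) ≤ 1 := by
    refine (abs_le_of_sq_le_sq' ?_ zero_le_one).2
    rw [mul_pow, Real.sq_sqrt hscore]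
    nlinarith [mul_nonneg (sq_nonneg κ) hscore]
  calc _ ≤ σ j * ((m : ℝ) ^ (1 / p.toReal - 1 / 2) * √(leverageScore A j)) :=
        mul_le_mul_of_nonneg_left hnorm (hs.trans_le (hsσ j)).le
    _ = s * (κ * √(leverageScore A j)) := by
        rw [hκ]
        field_simp
    _ ≤ s := mul_le_of_le_one_right hs.le hκ_sqrt

theorem measure_radq_lt_le {ν : Measure (Fin n → Fin m → ℝ)} [IsProbabilityMeasure ν]
    (hν : IsColumnExchangeable ν) (hp : p ≤ 2) (hs : 0 < s) (hsσ : ∀ k, s ≤ σ k) (j : Fin m) :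
    ν {A | radq 2 (ellipsoid p σ) (kerSet A) < σ j / 4} ≤
      ENNReal.ofReal (2 * n * (σ j * ((m : ℝ) ^ (1 / p.toReal - 1) / s)) ^ 2) := by
  have hm : (0 : ℝ) < m := by exact_mod_cast j.pos
  set κ := σ j * (m : ℝ) ^ (1 / p.toReal - 1 / 2) / s with hκ
  have hκ_pos : 0 < κ := zero_lt_one.trans_le (one_le_mul_rpow_div hp hs hsσ j)
  have hsub : {A : Fin n → Fin m → ℝ | radq 2 (ellipsoid p σ) (kerSet A) < σ j / 4} ⊆
      {A | 1 / (2 * κ ^ 2) ≤ leverageScore A j} := by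
    intro A hA
    by_contra hscore
    rw [Set.mem_ofPred_eq, not_le, lt_div_iff₀' (by positivity)] at hscore
    exact hA.not_ge (div_four_le_radq_of_leverageScore_le hp hs hsσ hscore.le)
  refine (measure_mono hsub).trans
    ((measure_le_leverageScore_le hν (by positivity) j).trans_eq ?_)
  have hsplit : (m : ℝ) ^ (1 / p.toReal - 1 / 2) = m ^ (1 / p.toReal - 1) * √m := by
    rw [Real.sqrt_eq_rpow, ← Real.rpow_add hm]
    ring_nf
  have hsqrt : √(m : ℝ) ^ 2 = m := Real.sq_sqrt hm.le
  rw [Fintype.card_fin, Fintype.card_fin, hκ, hsplit]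
  congr 1
  field_simp
  rw [hsqrt]
  ring

theorem tendsto_measure_radq_lt {ν : ∀ m, Measure (Fin n → Fin m → ℝ)}
    [∀ m, IsProbabilityMeasure (ν m)] (hν : ∀ m, IsColumnExchangeable (ν m)) (hp : p ≤ 2)
    {σ : ℕ → ℝ} (hσ : Antitone σ) (hσ_pos : ∀ j, 0 < σ j)
    (hσ_lim : Tendsto (fun j : ℕ => (j + 1 : ℝ) ^ (1 / p.toReal - 1) / σ j) atTop (𝓝 0)) :
    Tendsto (fun j => ν (j + 1) {A |
      radq 2 (ellipsoid p fun k : Fin (j + 1) => σ k) (kerSet A) < σ 0 / 4}) atTop (𝓝 0) := by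
  have hbound j : ν (j + 1) {A |
      radq 2 (ellipsoid p fun k : Fin (j + 1) => σ k) (kerSet A) < σ 0 / 4} ≤
        ENNReal.ofReal (2 * n * (σ 0 * ((j + 1 : ℝ) ^ (1 / p.toReal - 1) / σ j)) ^ 2) := by
    simpa using measure_radq_lt_le (hν (j + 1)) hp (hσ_pos j)
      (fun k : Fin (j + 1) => hσ (Nat.le_of_lt_succ k.isLt)) 0
  have hlim : Tendsto (fun j : ℕ =>
      2 * n * (σ 0 * ((j + 1 : ℝ) ^ (1 / p.toReal - 1) / σ j)) ^ 2) atTop (𝓝 0) := by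
    simpa using ((hσ_lim.const_mul (σ 0)).pow 2).const_mul (2 * (n : ℝ))
  refine tendsto_of_tendsto_of_tendsto_of_le_of_le tendsto_const_nhds ?_ (fun _ => zero_le) hbound
  simpa using ENNReal.tendsto_ofReal hlim

end Radius

section Rates

lemma tendsto_const_mul_natCast_rpow_neg {ρ : ℝ} (hρ : 0 < ρ) (C : ℝ) :
    Tendsto (fun n : ℕ => C * (n : ℝ) ^ (-ρ)) atTop (𝓝 0) := by
  simpa using ((tendsto_rpow_neg_atTop hρ).comp tendsto_natCast_atTop_atTop).const_mul C

lemma tendsto_const_mul_exp_neg_mul_natCast {b : ℝ} (hb : 0 < b) (C : ℝ) :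
    Tendsto (fun n : ℕ => C * Real.exp (-b * n)) atTop (𝓝 0) := by
  have h : Tendsto (fun n : ℕ => -b * (n : ℝ)) atTop atBot :=
    tendsto_natCast_atTop_atTop.const_mul_atTop_of_neg (neg_neg_of_pos hb)
  simpa using (Real.tendsto_exp_atBot.comp h).const_mul C

lemma antitone_natCast_add_one_rpow_neg {lam : ℝ} (hlam : 0 ≤ lam) :
    Antitone fun j : ℕ => (j + 1 : ℝ) ^ (-lam) := fun i j hij =>
  Real.rpow_le_rpow_of_nonpos (by positivity) (by gcongr) (neg_nonpos.mpr hlam)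

lemma tendsto_natCast_add_one_rpow_div_rpow {a b : ℝ} (hab : a < b) :
    Tendsto (fun j : ℕ => (j + 1 : ℝ) ^ a / (j + 1 : ℝ) ^ b) atTop (𝓝 0) := by
  have h := (tendsto_rpow_neg_atTop (sub_pos.mpr hab)).comp
    (tendsto_atTop_add_const_right _ 1 tendsto_natCast_atTop_atTop)
  refine h.congr fun j : ℕ => ?_
  rw [Function.comp_apply, neg_sub, Real.rpow_sub (by positivity)]

end Rates

theorem statement6_general {p : ℝ≥0∞} (hp1 : 1 ≤ p) (hp2 : p ≤ 2) {σ : ℕ → ℝ} (hσ : Antitone σ)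
    (hσ_pos : ∀ j, 0 < σ j)
    (hσ_lim : Tendsto (fun j : ℕ => (j + 1 : ℝ) ^ (1 / p.toReal - 1) / σ j) atTop (𝓝 0))
    (ν : ∀ n m, Measure (Fin n → Fin m → ℝ)) [∀ n m, IsProbabilityMeasure (ν n m)]
    (hν : ∀ n m, IsColumnExchangeable (ν n m)) {ρ C₂ : ℝ} (hρ : 0 < ρ) (hC₂ : 0 < C₂) (C C₁ : ℝ) :
    ∃ (m n : ℕ), 1 ≤ n ∧ n < m ∧
      ν n m {A | radq 2 (ellipsoid p fun j : Fin m => σ j) (kerSet A) ≤ C * (n : ℝ) ^ (-ρ)} <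
        ENNReal.ofReal (1 - C₁ * Real.exp (-C₂ * n)) := by
  have : Fact (1 ≤ p) := ⟨hp1⟩
  obtain ⟨n, hn, hn_rate, hn_prob⟩ : ∃ n : ℕ, 1 ≤ n ∧ C * (n : ℝ) ^ (-ρ) < σ 0 / 4 ∧
      C₁ * Real.exp (-C₂ * n) < 1 :=
    ((eventually_ge_atTop 1).and
      (((tendsto_const_mul_natCast_rpow_neg hρ C).eventually_lt_const
        (div_pos (hσ_pos 0) four_pos)).and
      ((tendsto_const_mul_exp_neg_mul_natCast hC₂ C₁).eventually_lt_const one_pos))).exists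
  have hprob := tendsto_measure_radq_lt (hν n) hp2 hσ hσ_pos hσ_lim
  obtain ⟨j, hj_prob, hj⟩ := ((hprob.eventually_lt_const
    (ENNReal.ofReal_pos.mpr (sub_pos.mpr hn_prob))).and (eventually_ge_atTop n)).exists
  refine ⟨j + 1, n, hn, Nat.lt_succ_of_le hj, (measure_mono fun A hA => ?_).trans_lt hj_prob⟩
  exact lt_of_le_of_lt hA hn_rate

instance {n m : ℕ} : IsProbabilityMeasure (gaussianMatrix n m) := by
  unfold gaussianMatrix
  infer_instance

lemma isColumnExchangeable_gaussianMatrix (n m : ℕ) :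
    IsColumnExchangeable (gaussianMatrix n m) :=
  isColumnExchangeable_pi_pi fun _ => gaussianReal 0 1

/-- For `1 < p ≤ 2` and `0 < λ < 1/p* = 1 - 1/p`, with `σ_j = j^{-λ}`
(0-indexed), the polynomial decay rate of the radius of random information is `0`: for every
`ρ > 0` and all constants `C, C₁, C₂ > 0` there exist `1 ≤ n < m` such that the probability
that `rad(E^m_{p,σ}, ker G_{n,m}) ≤ C n^{-ρ}` is smaller than `1 - C₁ exp(-C₂ n)`. -/
theorem statement6 (p : ℝ≥0∞) (hp1 : 1 < p) (hp2 : p ≤ 2) (lam : ℝ)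
    (hlam0 : 0 < lam) (hlam : lam < 1 - 1 / p.toReal) :
    ∀ ρ C C₁ C₂ : ℝ, 0 < ρ → 0 < C → 0 < C₁ → 0 < C₂ →
      ∃ (m n : ℕ), 1 ≤ n ∧ n < m ∧
        gaussianMatrix n m {A |
            radq 2 (ellipsoid p (fun j : Fin m => ((j : ℕ) + 1 : ℝ) ^ (-lam))) (kerSet A) ≤
              C * (n : ℝ) ^ (-ρ)} <
          ENNReal.ofReal (1 - C₁ * Real.exp (-C₂ * n)) := by
  intro ρ C C₁ C₂ hρ _ _ hC₂
  exact statement6_general hp1.le hp2 (antitone_natCast_add_one_rpow_neg hlam0.le)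
    (fun j => by positivity) (tendsto_natCast_add_one_rpow_div_rpow (by linarith)) gaussianMatrix
    isColumnExchangeable_gaussianMatrix hρ hC₂ C C₁
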